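/- arXiv:1611.07842 — 8 statements merged into one kernel-verified Lean document; each statement's English description precedes it below -/
import Mathlib

section
/- Let N be a positive integer and let A, B be N×N complex matrices such that [[A,B],A] = 0 (i.e., the commutator [A,B] = AB − BA commutes with A). Then for every integer k ≥ 1, the trace of [A,B]^k equals 0. -/
/-- If the commutator `[A,B]` commutes with `A`, then `trace ([A,B]^k) = 0`
for every integer `k ≥ 1`. -/
theorem trace_commutator_pow_eq_zero (N : ℕ) (hN : 0 < N)
    (A B : Matrix (Fin N) (Fin N) ℂ)
    (h : (A * B - B * A) * A = A * (A * B - B * A)) :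
    ∀ k : ℕ, 1 ≤ k → ((A * B - B * A) ^ k).trace = 0 := by
  intro k hk
  obtain ⟨m, rfl⟩ : ∃ m, k = m + 1 := ⟨k - 1, by omega⟩
  have hc : (A * B - B * A) ^ m * A = A * (A * B - B * A) ^ m :=
    Commute.pow_left (show Commute (A * B - B * A) A from h) m
  -- With `C = [A,B]`, the power `C ^ (m + 1)` is itself the commutator `[A, C ^ m * B]`.
  have key : (A * B - B * A) ^ (m + 1)
      = A * ((A * B - B * A) ^ m * B) - (A * B - B * A) ^ m * B * A := by
    rw [pow_succ, mul_sub, ← mul_assoc, ← mul_assoc, ← mul_assoc, hc]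
  rw [key, Matrix.trace_sub, Matrix.trace_mul_comm A, sub_self]
end

section
/- (Jacobson's theorem.) Let N be a positive integer and let A, B be N×N complex matrices such that [[A,B],A] = 0. Then the commutator [A,B] is nilpotent. -/
/-!
Write `C = AB - BA`, which commutes with `A`. Bracketing with `B` differentiates polynomials in `A`:
`q(A) B = B q(A) + q'(A) C` (`aeval_mul_commutator`). Consequently `q(A) C ^ m = 0` implies
`0 = C ^ m q(A) B C ^ m = C ^ m B q(A) C ^ m + q'(A) C ^ (2m+1) = q'(A) C ^ (2m+1)`, so a relation
for `q` yields one for `q'`. Starting from the characteristic polynomial of `A` (Cayley–Hamilton,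
`m = 0`) and differentiating down to a nonzero constant, which exists in characteristic zero, gives
a vanishing power of `C`.
-/

open Polynomial

/-- The commutator with `B` acts on polynomials in `A` as the derivation sending `A` to `C`. -/
lemma aeval_mul_commutator {R : Type*} [Ring R] [Algebra ℂ R] {A B C : R}
    (hC : A * B = B * A + C) (hA : Commute C A) (q : ℂ[X]) :
    aeval A q * B = B * aeval A q + aeval A (derivative q) * C := by
  induction q using Polynomial.induction_on' with
  | add p q hp hq =>
    simp only [map_add, add_mul, mul_add, hp, hq]
    abel
  | monomial n c =>
    have hpow : ∀ n : ℕ, A ^ n * B = B * A ^ n + (n : R) * A ^ (n - 1) * C := by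
      intro n
      induction n with
      | zero => simp
      | succ n ih =>
        have hsucc : (n : R) * A ^ (n - 1) * A = (n : R) * A ^ n := by
          cases n with
          | zero => simp
          | succ n => simp [mul_assoc, pow_succ]
        calc A ^ (n + 1) * B = A ^ n * B * A + A ^ n * C := by
              rw [pow_succ, mul_assoc, hC, mul_add, mul_assoc]
          _ = B * A ^ (n + 1) + (n : R) * A ^ (n - 1) * A * C + A ^ n * C := by
              rw [ih, add_mul, mul_assoc _ C A, hA.eq, pow_succ]
              simp only [mul_assoc]
          _ = _ := by
              rw [hsucc]
              simp only [Nat.add_sub_cancel, Nat.cast_add, Nat.cast_one, add_mul, one_mul]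
              abel
    simp only [derivative_monomial, aeval_monomial, map_mul, map_natCast]
    rw [mul_assoc, hpow, mul_add, ← mul_assoc, Algebra.commutes c B]
    simp only [mul_assoc]

/-- In characteristic zero, a relation `q(A) C ^ m = 0` with `q ≠ 0` can be differentiated down
to a nonzero constant polynomial. -/
lemma exists_pow_eq_zero_of_aeval {R : Type*} [Ring R] [Algebra ℂ R] {A B C : R}
    (hC : A * B = B * A + C) (hA : Commute C A) (d : ℕ) :
    ∀ (q : ℂ[X]) (m : ℕ), q.natDegree = d → q ≠ 0 → aeval A q * C ^ m = 0 →
      ∃ k : ℕ, C ^ k = 0 := by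
  induction d using Nat.strong_induction_on with
  | _ d ih =>
    intro q m hd hq hm
    have hcomm : ∀ p : ℂ[X], Commute C (aeval A p) := fun p => by
      induction p using Polynomial.induction_on' with
      | add p q hp hq => simpa using hp.add_right hq
      | monomial n c =>
        rw [aeval_monomial]
        exact (Algebra.commute_algebraMap_right c C).mul_right (hA.pow_right n)
    by_cases h0 : q.natDegree = 0
    · obtain ⟨c, rfl⟩ := natDegree_eq_zero.mp h0
      have hc : c ≠ 0 := by rintro rfl; simp at hq
      refine ⟨m, ?_⟩
      rw [aeval_C, ← Algebra.smul_def] at hm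
      rw [← one_smul ℂ (C ^ m), ← inv_mul_cancel₀ hc, mul_smul, hm, smul_zero]
    · have hlt := natDegree_derivative_lt h0
      have hq' : derivative q ≠ 0 := fun h => h0 (derivative_eq_zero.mp h)
      refine ih _ (hd ▸ hlt) (derivative q) (m + (1 + m)) rfl hq' ?_
      have hm' : C ^ m * aeval A q = 0 := by rw [((hcomm q).pow_left m).eq, hm]
      have key : C ^ m * (aeval A q * B) * C ^ m = 0 := by
        rw [← mul_assoc, hm', zero_mul, zero_mul]
      rw [aeval_mul_commutator hC hA, mul_add, add_mul] at key
      rw [mul_assoc, mul_assoc B, hm, mul_zero, mul_zero, zero_add] at key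
      rw [← key, ← mul_assoc (C ^ m), ((hcomm _).pow_left m).eq]
      simp only [pow_add, pow_one, mul_assoc]

/-- Jacobson's theorem: if the commutator `[A,B]` commutes with `A`,
then `[A,B]` is nilpotent. -/
theorem commutator_nilpotent_of_commutes (N : ℕ) (hN : 0 < N)
    (A B : Matrix (Fin N) (Fin N) ℂ)
    (h : (A * B - B * A) * A = A * (A * B - B * A)) :
    ∃ k : ℕ, 0 < k ∧ (A * B - B * A) ^ k = 0 := by
  have hC : A * B = B * A + (A * B - B * A) := by abel
  obtain ⟨k, hk⟩ := exists_pow_eq_zero_of_aeval hC h _ A.charpoly 0 rfl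
    A.charpoly_monic.ne_zero (by rw [Matrix.aeval_self_charpoly, zero_mul])
  exact ⟨k + 1, k.succ_pos, by rw [pow_succ, hk, zero_mul]⟩
end

section
/- Let N be a positive integer and let D, T be N×N complex matrices such that T commutes with [D,T] (i.e., [[D,T],T] = 0). Then [D,T] is not an invertible matrix. -/
/-- If `T` commutes with the commutator `[D,T]`, then `[D,T]` is not invertible. -/
theorem commutator_not_invertible (N : ℕ) (hN : 0 < N)
    (D T : Matrix (Fin N) (Fin N) ℂ)
    (h : (D * T - T * D) * T = T * (D * T - T * D)) :
    ¬ IsUnit (D * T - T * D) := by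
  rintro ⟨u, hu⟩
  -- An inverse `B` of `[D,T]` commutes with `T`, so `tr ([D,T] * B) = 0` by cyclicity,
  -- whereas `[D,T] * B = 1` has trace `N`.
  set B : Matrix (Fin N) (Fin N) ℂ := ↑u⁻¹ with hB
  have hTB : T * B = B * T := by
    have hc : Commute T (u : Matrix (Fin N) (Fin N) ℂ) := by
      rw [hu]; exact h.symm
    exact hc.units_inv_right
  have h1 : (D * T - T * D) * B = 1 := by rw [← hu]; exact u.mul_inv
  have h2 : Matrix.trace ((D * T - T * D) * B) = 0 := by
    rw [sub_mul, Matrix.trace_sub, mul_assoc, mul_assoc, hTB, Matrix.trace_mul_comm T,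
      mul_assoc, sub_self]
  rw [h1, Matrix.trace_one, Fintype.card_fin] at h2
  exact hN.ne' (by exact_mod_cast h2)
end

section
/- Let N be a positive integer, let j be an invertible Hermitian N×N complex matrix, and for A ∈ M_N(ℂ) define the Krein adjoint A^× := j⁻¹ A* j, where A* is the conjugate transpose. Let β be an invertible N×N complex matrix with β^× = β, and define A^{*_β} := β A^× β⁻¹. Then for any A ∈ M_N(ℂ), the identity (A^{*_β})^× = (A^×)^{*_β} holds if and only if A commutes with β². -/
open Matrix

/-!
The Krein adjoint is an anti-multiplicative involution that fixes `β`, hence also `β⁻¹`. Therefore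
`(β A^× β⁻¹)^× = β⁻¹ A β`, while `β (A^×)^× β⁻¹ = β A β⁻¹`; multiplying the equation
`β⁻¹ A β = β A β⁻¹` by `β` on both sides turns it into `A β² = β² A`.
-/

/-- On `M_N(ℂ)` with Krein structure given by an invertible Hermitian `j`
(Krein adjoint `A^× = j⁻¹ Aᴴ j`) and an invertible `β` with `β^× = β`
(β-adjoint `A^{*_β} = β A^× β⁻¹`), one has `(A^{*_β})^× = (A^×)^{*_β}`
if and only if `A` commutes with `β²`. -/
theorem krein_beta_adjoint_commute_iff (N : ℕ) (hN : 0 < N)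
    (j : Matrix (Fin N) (Fin N) ℂ) (hj : IsUnit j) (hjH : j.IsHermitian)
    (β : Matrix (Fin N) (Fin N) ℂ) (hβ : IsUnit β)
    (hβx : j⁻¹ * βᴴ * j = β)
    (A : Matrix (Fin N) (Fin N) ℂ) :
    j⁻¹ * (β * (j⁻¹ * Aᴴ * j) * β⁻¹)ᴴ * j
      = β * (j⁻¹ * (j⁻¹ * Aᴴ * j)ᴴ * j) * β⁻¹
    ↔ A * (β * β) = (β * β) * A := by
  have hjd : IsUnit j.det := (Matrix.isUnit_iff_isUnit_det j).mp hj
  have hβd : IsUnit β.det := (Matrix.isUnit_iff_isUnit_det β).mp hβ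
  have hj1 : j * j⁻¹ = 1 := Matrix.mul_nonsing_inv j hjd
  have hj2 : j⁻¹ * j = 1 := Matrix.nonsing_inv_mul j hjd
  have hβ1 : β * β⁻¹ = 1 := Matrix.mul_nonsing_inv β hβd
  have hβ2 : β⁻¹ * β = 1 := Matrix.nonsing_inv_mul β hβd
  have hjj (X : Matrix (Fin N) (Fin N) ℂ) : j * (j⁻¹ * X) = X := by
    rw [← mul_assoc, hj1, one_mul]
  have hjj' (X : Matrix (Fin N) (Fin N) ℂ) : j⁻¹ * (j * X) = X := by
    rw [← mul_assoc, hj2, one_mul]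
  have hββ (X : Matrix (Fin N) (Fin N) ℂ) : β * (β⁻¹ * X) = X := by
    rw [← mul_assoc, hβ1, one_mul]
  have hββ' (X : Matrix (Fin N) (Fin N) ℂ) : β⁻¹ * (β * X) = X := by
    rw [← mul_assoc, hβ2, one_mul]
  have hjinv : (j⁻¹)ᴴ = j⁻¹ := by rw [Matrix.conjTranspose_nonsing_inv, hjH.eq]
  have hβH : βᴴ = j * β * j⁻¹ := by
    conv_rhs => rw [← hβx]
    simp only [mul_assoc, hjj, hj1, mul_one]
  have hβinvH : (β⁻¹)ᴴ = j * β⁻¹ * j⁻¹ := by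
    rw [Matrix.conjTranspose_nonsing_inv, hβH]
    apply Matrix.inv_eq_right_inv
    simp only [mul_assoc, hjj', hββ, hj1]
  have hL : j⁻¹ * (β * (j⁻¹ * Aᴴ * j) * β⁻¹)ᴴ * j = β⁻¹ * A * β := by
    simp only [Matrix.conjTranspose_mul, Matrix.conjTranspose_conjTranspose, hjinv, hjH.eq, hβH,
      hβinvH, mul_assoc, hjj', hj2, mul_one]
  have hR : j⁻¹ * (j⁻¹ * Aᴴ * j)ᴴ * j = A := by
    simp only [Matrix.conjTranspose_mul, Matrix.conjTranspose_conjTranspose, hjinv, hjH.eq,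
      mul_assoc, hjj', hj2, mul_one]
  rw [hL, hR]
  constructor
  · intro h
    have h' := congrArg (fun X => β * X * β) h
    simpa only [mul_assoc, hββ, hβ2, mul_one] using h'
  · intro h
    have h' := congrArg (fun X => β⁻¹ * X * β⁻¹) h
    simpa only [mul_assoc, hββ', hβ1, mul_one] using h'
end

section
/- Let V be a real vector space equipped with a symmetric bilinear form g, and let Λ : V → V be a linear map that is a g-isometry, i.e., g(Λx, Λy) = g(x, y) for all x, y ∈ V. Suppose u, w ∈ V and t ∈ ℝ with t ≠ 0 satisfy Λu = (cosh t)·u − (sinh t)·w and Λw = −(sinh t)·u + (cosh t)·w. Then g(u,u) + g(w,w) = 0 and g(u,w) = 0. -/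
/-- If a `g`-isometry `Λ` acts on a pair of vectors `u, w` as a hyperbolic
rotation of nonzero parameter `t` (a "boost" in the plane spanned by `u, w`),
then `g(u,u) + g(w,w) = 0` and `g(u,w) = 0`. -/
theorem boost_forces_null_pair {V : Type*} [AddCommGroup V] [Module ℝ V]
    (g : LinearMap.BilinForm ℝ V) (hsymm : ∀ x y, g x y = g y x)
    (Λ : V →ₗ[ℝ] V) (hiso : ∀ x y, g (Λ x) (Λ y) = g x y)
    (u w : V) (t : ℝ) (ht : t ≠ 0)
    (hu : Λ u = Real.cosh t • u - Real.sinh t • w)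
    (hw : Λ w = -Real.sinh t • u + Real.cosh t • w) :
    g u u + g w w = 0 ∧ g u w = 0 := by
  have hs : Real.sinh t ≠ 0 := by simpa using ht
  have hc : Real.cosh t ^ 2 = Real.sinh t ^ 2 + 1 := Real.cosh_sq t
  have huu := hiso u u
  have huw := hiso u w
  rw [hu] at huu huw
  rw [hw] at huw
  simp only [map_add, map_sub, map_smul, LinearMap.sub_apply,
    LinearMap.smul_apply, smul_eq_mul, hsymm w u] at huu huw
  -- After cancelling `sinh t`, the two isometry identities say that `g u u + g w w` and
  -- `2 * g u w` solve a homogeneous system of determinant `cosh² t - sinh² t = 1`.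
  have h₁ : Real.sinh t * (g u u + g w w) = 2 * Real.cosh t * g u w := by
    apply mul_left_cancel₀ hs
    linear_combination huu - g u u * hc
  have h₂ : 2 * Real.sinh t * g u w = Real.cosh t * (g u u + g w w) := by
    apply mul_left_cancel₀ hs
    linear_combination huw - g u w * hc
  constructor
  · linear_combination -(g u u + g w w) * hc - Real.cosh t * h₂ - Real.sinh t * h₁
  · linear_combination -g u w * hc - Real.cosh t / 2 * h₁ - Real.sinh t / 2 * h₂
end

section
/- Let b, c be nonzero real numbers, D = [[0, b], [c, 0]] ∈ M₂(ℂ), and π : ℂ² → M₂(ℂ) the diagonal embedding π(a₁, a₂) = diag(a₁, a₂). Let λ, μ ∈ ℝ and β = [[0, λ], [μ, 0]]. Then there exists δ ∈ ℂ² with β = i·[D, π(δ)] if and only if λ·c + μ·b = 0 (equivalently λ/b + μ/c = 0). In particular, there exist λ > 0 and μ > 0 with this property if and only if b·c < 0. -/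
/-!
The commutator `[D, π(δ)]` depends only on `t = δ₂ - δ₁` and has off-diagonal entries `bt` and
`-ct` (`eq_commutator_iff`). So `β` is exact iff `λ = ibt` and `μ = -ict` for some `t`; eliminating
`t` gives `λc + μb = 0`, and conversely `t = λ/(ib)` works. Positive `λ, μ` on this line force
`b` and `c` to have opposite signs, and then `(λ, μ) = (b², -bc)` is such a pair.
-/

open Matrix

/-- The diagonal representation of `ℂ²` on `ℂ²`. -/
noncomputable def diagRep (a : ℂ × ℂ) : Matrix (Fin 2) (Fin 2) ℂ :=
  !![a.1, 0; 0, a.2]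

/-- The commutator `[D, π(δ)]` is off-diagonal with entries `b(δ₂ - δ₁)` and `c(δ₁ - δ₂)`. -/
lemma eq_commutator_iff (b c l m : ℂ) (δ : ℂ × ℂ) :
    (!![0, l; m, 0] : Matrix (Fin 2) (Fin 2) ℂ) =
        Complex.I • (!![0, b; c, 0] * diagRep δ - diagRep δ * !![0, b; c, 0]) ↔
      l = Complex.I * (b * (δ.2 - δ.1)) ∧ m = Complex.I * (c * (δ.1 - δ.2)) := by
  have h : Complex.I • (!![0, b; c, 0] * diagRep δ - diagRep δ * !![0, b; c, 0]) =
      !![0, Complex.I * (b * (δ.2 - δ.1)); Complex.I * (c * (δ.1 - δ.2)), 0] := by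
    ext i j
    fin_cases i <;> fin_cases j <;> simp [diagRep] <;> ring
  rw [h]
  constructor
  · intro e
    exact ⟨by simpa using congrFun (congrFun e 0) 1, by simpa using congrFun (congrFun e 1) 0⟩
  · rintro ⟨rfl, rfl⟩
    rfl

/-- For `D = [[0,b],[c,0]]` with `b, c` nonzero reals, the 1-form
`β = [[0,λ],[μ,0]]` (with `λ, μ` real) is exact, i.e. `β = i[D, π(δ)]` for some
`δ ∈ ℂ²`, iff `λc + μb = 0`; and an exact such `β` with `λ, μ > 0` exists iff
`bc < 0`. -/
theorem exact_one_form_iff (b c : ℝ) (hb : b ≠ 0) (hc : c ≠ 0) :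
    (∀ lam mu : ℝ,
      (∃ δ : ℂ × ℂ,
        (!![0, (lam : ℂ); (mu : ℂ), 0] : Matrix (Fin 2) (Fin 2) ℂ) =
          Complex.I • (!![0, (b : ℂ); (c : ℂ), 0] * diagRep δ -
            diagRep δ * !![0, (b : ℂ); (c : ℂ), 0]))
      ↔ lam * c + mu * b = 0)
    ∧ ((∃ lam mu : ℝ, 0 < lam ∧ 0 < mu ∧
        ∃ δ : ℂ × ℂ,
          (!![0, (lam : ℂ); (mu : ℂ), 0] : Matrix (Fin 2) (Fin 2) ℂ) =
            Complex.I • (!![0, (b : ℂ); (c : ℂ), 0] * diagRep δ -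
              diagRep δ * !![0, (b : ℂ); (c : ℂ), 0]))
      ↔ b * c < 0) := by
  have key : ∀ lam mu : ℝ,
      (∃ δ : ℂ × ℂ,
        (!![0, (lam : ℂ); (mu : ℂ), 0] : Matrix (Fin 2) (Fin 2) ℂ) =
          Complex.I • (!![0, (b : ℂ); (c : ℂ), 0] * diagRep δ -
            diagRep δ * !![0, (b : ℂ); (c : ℂ), 0]))
      ↔ lam * c + mu * b = 0 := by
    intro lam mu
    have hb' : (b : ℂ) ≠ 0 := by exact_mod_cast hb
    simp only [eq_commutator_iff]
    constructor
    · rintro ⟨δ, h1, h2⟩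
      have h : (lam : ℂ) * c + mu * b = 0 := by
        rw [h1, h2]
        ring
      exact_mod_cast h
    · intro h
      have h' : (lam : ℂ) * c + mu * b = 0 := by exact_mod_cast h
      -- only `δ₂ - δ₁ = λ / (i b)` matters, so `δ₁ = 0` can be chosen
      refine ⟨(0, -Complex.I * lam / b), ?_, ?_⟩
      · field_simp
        linear_combination (lam : ℂ) * Complex.I_sq
      · field_simp
        linear_combination h' - (lam : ℂ) * c * Complex.I_sq
  refine ⟨key, ?_⟩
  simp only [key]
  constructor
  · rintro ⟨lam, mu, hl, hm, h⟩
    -- multiplying `λc = -μb` by `b` gives `λ(bc) = -μb² < 0`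
    have h1 : lam * (b * c) = -(mu * b ^ 2) := by linear_combination b * h
    have h2 : 0 < mu * b ^ 2 := by positivity
    by_contra! hbc
    nlinarith [mul_nonneg hl.le hbc]
  · intro h
    exact ⟨b ^ 2, -(b * c), by positivity, by linarith, by ring⟩
end

section
/- Let Q and Q' be quadratic forms on real vector spaces X and X', let S and S' be nonzero real vector spaces, and let ρ : Cl(Q) → End(S) and ρ' : Cl(Q') → End(S') be unital ℝ-algebra homomorphisms from the Clifford algebras. Suppose h : S → S' is a linear isomorphism and Λ : X → X' is a linear map such that h ∘ ρ(ι(v)) = ρ'(ι(Λv)) ∘ h for all v ∈ X, where ι denotes the canonical embedding of a vector space into its Clifford algebra. Then Q'(Λv) = Q(v) for all v ∈ X; in particular Λ is an isometry of quadratic spaces. -/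
/-- Clifford multiplication by a vector `v` squares to the scalar `Q v`. -/
theorem clifford_rep_ι_sq {X S : Type*} [AddCommGroup X] [Module ℝ X]
    [AddCommGroup S] [Module ℝ S] (Q : QuadraticForm ℝ X)
    (ρ : CliffordAlgebra Q →ₐ[ℝ] Module.End ℝ S) (v : X) (s : S) :
    ρ (CliffordAlgebra.ι Q v) (ρ (CliffordAlgebra.ι Q v) s) = Q v • s := by
  rw [← Module.End.mul_apply, ← map_mul, CliffordAlgebra.ι_sq_scalar, AlgHom.commutes,
    Module.algebraMap_end_apply]

/-- If `h : S ≃ S'` intertwines Clifford module structures via a linear map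
`Λ : X → X'` (i.e. `h ∘ ρ(ι v) = ρ'(ι (Λ v)) ∘ h` for all `v`), then `Λ` is an
isometry: `Q'(Λ v) = Q v` for all `v`. -/
theorem clifford_intertwiner_isometry
    {X X' S S' : Type*}
    [AddCommGroup X] [Module ℝ X] [AddCommGroup X'] [Module ℝ X']
    [AddCommGroup S] [Module ℝ S] [Nontrivial S]
    [AddCommGroup S'] [Module ℝ S'] [Nontrivial S']
    (Q : QuadraticForm ℝ X) (Q' : QuadraticForm ℝ X')
    (ρ : CliffordAlgebra Q →ₐ[ℝ] Module.End ℝ S)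
    (ρ' : CliffordAlgebra Q' →ₐ[ℝ] Module.End ℝ S')
    (h : S ≃ₗ[ℝ] S') (Λ : X →ₗ[ℝ] X')
    (hcomm : ∀ v : X,
      h.toLinearMap ∘ₗ ρ (CliffordAlgebra.ι Q v)
        = ρ' (CliffordAlgebra.ι Q' (Λ v)) ∘ₗ h.toLinearMap) :
    ∀ v : X, Q' (Λ v) = Q v := by
  intro v
  obtain ⟨s, hs⟩ := exists_ne (0 : S)
  have hc : ∀ t, h (ρ (CliffordAlgebra.ι Q v) t) = ρ' (CliffordAlgebra.ι Q' (Λ v)) (h t) :=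
    fun t => LinearMap.congr_fun (hcomm v) t
  -- Applying the intertwining relation twice compares the two scalars on `h s ≠ 0`.
  have key : Q' (Λ v) • h s = Q v • h s := by
    rw [← clifford_rep_ι_sq Q' ρ', ← hc, ← hc, clifford_rep_ι_sq, map_smul]
  exact smul_left_injective ℝ (h.map_ne_zero_iff.mpr hs) key
end

section
/- Let E be a finite nonempty set, θ : E → ℝ, and c : E → ℂ. Let M be the complex matrix indexed by E × {0, 1} whose only nonzero entries are M((e,0),(e,1)) = c(e)·exp(iθ(e)) and M((e,1),(e,0)) = −c(e)·exp(−iθ(e)) for each e ∈ E. Then the operator norm of M acting on the Hermitian inner product space ℂ^{E × {0,1}} equals max_{e ∈ E} |c(e)|. -/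
/-!
Row `(e, b)` of the matrix has a single nonzero entry, in column `(e, !b)`, and that entry is
`c e` times a complex number of modulus one. Hence each coordinate satisfies
`‖(M x) (e, b)‖ = ‖c e‖ * ‖x (e, !b)‖` (`norm_apply_of_split`). Summing squares over the
involution `(e, b) ↦ (e, !b)` bounds the operator norm by `max ‖c e‖`, and the basis vector at
`(e, true)` shows that each `‖c e‖` is a lower bound.
-/

open Matrix

/-- Each coordinate of `M x` is, up to a phase, `c e` times the opposite coordinate of `x`. -/
lemma norm_apply_of_split {E : Type*} [Fintype E] [DecidableEq E]
    (θ : E → ℝ) (c : E → ℂ)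
    (M : Matrix (E × Bool) (E × Bool) ℂ)
    (hM : ∀ p q : E × Bool,
      M p q =
        if p.1 = q.1 ∧ p.2 = false ∧ q.2 = true then
          c p.1 * Complex.exp (Complex.I * (θ p.1 : ℂ))
        else if p.1 = q.1 ∧ p.2 = true ∧ q.2 = false then
          -(c p.1 * Complex.exp (-(Complex.I * (θ p.1 : ℂ))))
        else 0)
    (x : EuclideanSpace ℂ (E × Bool)) (e : E) (b : Bool) :
    ‖Matrix.toEuclideanCLM (𝕜 := ℂ) M x (e, b)‖ = ‖c e‖ * ‖x (e, !b)‖ := by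
  have hx : Matrix.toEuclideanCLM (𝕜 := ℂ) M x (e, b) = M (e, b) (e, !b) * x (e, !b) := by
    rw [Matrix.ofLp_toEuclideanCLM, Matrix.mulVec, dotProduct]
    refine Finset.sum_eq_single (e, !b) ?_ (by simp)
    rintro ⟨e', b'⟩ - hne
    have h0 : M (e, b) (e', b') = 0 := by
      rw [hM]
      cases b <;> cases b' <;> simp at hne ⊢ <;> exact fun h => absurd h.symm hne
    rw [h0, zero_mul]
  have h1 : ‖Complex.exp (Complex.I * (θ e : ℂ))‖ = 1 := by
    rw [mul_comm, Complex.norm_exp_ofReal_mul_I]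
  have h2 : ‖Complex.exp (-(Complex.I * (θ e : ℂ)))‖ = 1 := by
    rw [Complex.exp_neg, norm_inv, h1, inv_one]
  rw [hx, norm_mul, hM]
  cases b <;> simp [h1, h2]

/-- The operator norm of the block matrix with `2×2` antisymmetric-type blocks
`[[0, c(e)·e^{iθ(e)}], [-c(e)·e^{-iθ(e)}, 0]]` on `ℂ^{E × {0,1}}` equals
`max_{e} |c(e)|`. -/
theorem opNorm_split_graph_matrix {E : Type*} [Fintype E] [DecidableEq E]
    [Nonempty E] (θ : E → ℝ) (c : E → ℂ)
    (M : Matrix (E × Bool) (E × Bool) ℂ)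
    (hM : ∀ p q : E × Bool,
      M p q =
        if p.1 = q.1 ∧ p.2 = false ∧ q.2 = true then
          c p.1 * Complex.exp (Complex.I * (θ p.1 : ℂ))
        else if p.1 = q.1 ∧ p.2 = true ∧ q.2 = false then
          -(c p.1 * Complex.exp (-(Complex.I * (θ p.1 : ℂ))))
        else 0) :
    ‖Matrix.toEuclideanCLM (𝕜 := ℂ) M‖ =
      Finset.univ.sup' Finset.univ_nonempty fun e : E => ‖c e‖ := by
  have hle : ∀ e, ‖c e‖ ≤ Finset.univ.sup' Finset.univ_nonempty fun e : E => ‖c e‖ :=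
    fun e => Finset.le_sup' (fun e : E => ‖c e‖) (Finset.mem_univ e)
  have hnonneg : 0 ≤ Finset.univ.sup' Finset.univ_nonempty fun e : E => ‖c e‖ :=
    (norm_nonneg _).trans (hle (Classical.arbitrary E))
  apply le_antisymm
  · refine ContinuousLinearMap.opNorm_le_bound _ hnonneg fun x => ?_
    refine le_of_sq_le_sq ?_ (by positivity)
    rw [mul_pow, EuclideanSpace.norm_sq_eq, EuclideanSpace.norm_sq_eq, Finset.mul_sum,
      ← Equiv.sum_comp ((Equiv.refl E).prodCongr Equiv.boolNot) fun p => _ * ‖x p‖ ^ 2]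
    refine Finset.sum_le_sum ?_
    rintro ⟨e, b⟩ -
    rw [norm_apply_of_split θ c M hM, mul_pow]
    exact mul_le_mul_of_nonneg_right (pow_le_pow_left₀ (norm_nonneg _) (hle e) 2) (sq_nonneg _)
  · refine Finset.sup'_le _ _ fun e _ => ?_
    have h := (PiLp.norm_apply_le (Matrix.toEuclideanCLM (𝕜 := ℂ) M
      (EuclideanSpace.single (e, true) 1)) (e, false)).trans
      (ContinuousLinearMap.le_opNorm _ _)
    rw [norm_apply_of_split θ c M hM] at h
    simpa using h
end
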